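/- Let n, m1, m2, s1 be positive integers with s1 ≤ m1 and n > s1 + m2. Fix x0 ∈ ℂ^{m1} with x0 ≠ 0 and ‖x0‖₀ ≤ s1, and y0 ∈ ℂ^{m2} with y0 ≠ 0. Then for Lebesgue-almost all pairs (D, E) ∈ ℂ^{n×m1} × ℂ^{n×m2}, every pair (x, y) ∈ ℂ^{m1} × ℂ^{m2} with ‖x‖₀ ≤ s1 and (D x) ⊛ (E y) = (D x0) ⊛ (E y0) satisfies x = σ x0 and y = σ⁻¹ y0 for some nonzero σ ∈ ℂ. (Weak identifiability of blind deconvolution with mixed sparsity/subspace constraints.) -/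

import Mathlib

/-!
The discrete Fourier transform `F` is a linear automorphism, so it preserves null sets, and it turns
circular convolution into the pointwise product (`dft_cconv`). With `A = F D` and `B = F E`, the
hypothesis on `(x, y)` becomes `(A x) k * (B y) k = (A x0) k * (B y0) k` for every `k`, that is, each
row `B k` is orthogonal to `w k = (A x) k • y - (A x0) k • y0`.

Suppose first that every `w k` is nonzero. For each of the finitely many supports of `x`, the pair
`(x, y)` has at most `s1 + m2` complex parameters, while the `n` orthogonality conditions cut `n`
complex dimensions out of the space of matrices `B`. As `s1 + m2 < n`, the bad pairs `(A, B)` lie in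
the image of a differentiable map out of a space of smaller dimension, hence form a null set
(`ae_exists_dot_ne_zero`, `ae_bilinear_separated`). Counting dimensions in the space of pairs, instead
of fixing `A`, avoids having to show that the bad set is measurable.

Otherwise some `w k` vanishes. Generically `A x0` and `B y0` have no zero entry, so `y = σ⁻¹ • y0`
with `σ ≠ 0`, and the equations reduce to `A (x - σ • x0) = 0`. The same dimension count, now with the
`s1 + 1` parameters `(x, σ)`, forces `x = σ • x0` for almost every `A` (`ae_sub_smul_separated`).
-/

open MeasureTheory Filter

/-- Circular convolution of two vectors in `ℂ^n` indexed by `ZMod n`. -/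
noncomputable def cconv {n : ℕ} [NeZero n] (u v : ZMod n → ℂ) : ZMod n → ℂ :=
  fun k => ∑ j : ZMod n, u j * v (k - j)

/-- Matrix-vector multiplication `D x` for `D ∈ ℂ^{n×m}`. -/
noncomputable def mApply {n m : ℕ} [NeZero n] (D : ZMod n → Fin m → ℂ) (x : Fin m → ℂ) :
    ZMod n → ℂ :=
  fun k => ∑ i, D k i * x i

/-- `‖x‖₀`, the number of nonzero entries of a vector. -/
noncomputable def l0 {m : ℕ} (x : Fin m → ℂ) : ℕ := (Function.support x).ncard

/-! ### Null images and the dimension count -/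

/-- The easy case of Sard's theorem: a differentiable map out of a space of smaller dimension has
null image. Precomposing with a linear surjection from the target turns it into a self-map of the
target whose derivative is everywhere singular. -/
lemma addHaar_range_eq_zero_of_finrank_lt {P E : Type*}
    [NormedAddCommGroup P] [NormedSpace ℝ P] [FiniteDimensional ℝ P]
    [NormedAddCommGroup E] [NormedSpace ℝ E] [FiniteDimensional ℝ E]
    [MeasurableSpace E] [BorelSpace E] (μ : Measure E) [μ.IsAddHaarMeasure]
    (f : P → E) (hf : Differentiable ℝ f)
    (h : Module.finrank ℝ P < Module.finrank ℝ E) : μ (Set.range f) = 0 := by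
  obtain ⟨L, hL⟩ : ∃ L : E →ₗ[ℝ] P, Function.Surjective L := by
    let bE := (Module.finBasis ℝ E).equivFun
    let bP := (Module.finBasis ℝ P).equivFun
    refine ⟨bP.symm.toLinearMap ∘ₗ LinearMap.funLeft ℝ ℝ (Fin.castLE h.le) ∘ₗ bE.toLinearMap, ?_⟩
    exact bP.symm.surjective.comp
      ((LinearMap.funLeft_surjective_of_injective ℝ ℝ _ (Fin.castLE_injective h.le)).comp
        bE.surjective)
  let L' : E →L[ℝ] P := LinearMap.toContinuousLinearMap L
  have hL' : Function.Surjective L' := hL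
  have key := addHaar_image_eq_zero_of_det_fderivWithin_eq_zero μ (s := Set.univ) (f := f ∘ L')
    (f' := fun x => (fderiv ℝ f (L' x)).comp L')
    (fun x _ => ((hf (L' x)).hasFDerivAt.comp x L'.hasFDerivAt).hasFDerivWithinAt)
    (fun x _ => by
      have hker := LinearMap.ker_ne_bot_of_finrank_lt (f := L) h
      refine LinearMap.det_eq_zero_iff_ker_ne_bot.2 fun hbot => hker ?_
      rw [eq_bot_iff, ← hbot]
      intro z hz
      have hz' : L' z = 0 := hz
      simp [hz'])
  rwa [Set.image_univ, hL'.range_comp] at key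

/-- Extension by zero of a vector indexed by a subset of `I`, as a linear map. -/
def extendZero {I : Type*} (p : I → Prop) [DecidablePred p] :
    ({i // p i} → ℂ) →ₗ[ℝ] (I → ℂ) where
  toFun c i := if h : p i then c ⟨i, h⟩ else 0
  map_add' a b := by
    ext i
    by_cases h : p i <;> simp [h]
  map_smul' r a := by
    ext i
    by_cases h : p i <;> simp [h]

lemma extendZero_apply_of_not {I : Type*} (p : I → Prop) [DecidablePred p]
    (c : {i // p i} → ℂ) (i : I) (h : ¬ p i) : extendZero p c i = 0 := by
  simp [extendZero, h]

/-- A vector that vanishes off `p` is recovered from its restriction to `p`. -/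
lemma extendZero_restrict {I : Type*} (p : I → Prop) [DecidablePred p]
    (x : I → ℂ) (h : ∀ i, ¬ p i → x i = 0) : extendZero p (fun i => x i) = x := by
  ext i
  by_cases hi : p i
  · simp [extendZero, hi]
  · simp [extendZero, hi, h i hi]

lemma differentiable_extendZero_apply {I : Type*} [Fintype I] (p : I → Prop) [DecidablePred p]
    (i : I) : Differentiable ℝ (fun c : {i // p i} → ℂ => extendZero p c i) :=
  differentiable_pi.1 (LinearMap.toContinuousLinearMap (extendZero p)).differentiable i

/-- A row `M` orthogonal to `w`, where `w j ≠ 0`, is determined by its entries off `j`; scaling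
these entries by `w j` makes the reconstruction polynomial in `w` and the entries. -/
lemma row_eq_of_dot_eq_zero {I : Type*} [Fintype I] [DecidableEq I] (j : I) (w M : I → ℂ)
    (hw : w j ≠ 0) (h : ∑ i, M i * w i = 0) (i : I) :
    M i = w j * extendZero (· ≠ j) (fun l => M l / w j) i
      - (∑ l, extendZero (· ≠ j) (fun l => M l / w j) l * w l) * (if i = j then 1 else 0) := by
  have hsum : ∑ l, extendZero (· ≠ j) (fun l => M l / w j) l * w l = - M j := by
    rw [← Finset.add_sum_erase _ _ (Finset.mem_univ j)] at h ⊢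
    rw [extendZero_apply_of_not _ _ _ (by simp), zero_mul, zero_add]
    have : ∀ l ∈ Finset.univ.erase j,
        extendZero (· ≠ j) (fun l => M l / w j) l * w l = (M l * w l) / w j := by
      intro l hl
      have hl' : l ≠ j := Finset.ne_of_mem_erase hl
      simp only [extendZero, LinearMap.coe_mk, AddHom.coe_mk, hl', ne_eq, not_false_eq_true,
        dite_true]
      ring
    rw [Finset.sum_congr rfl this, ← Finset.sum_div, div_eq_iff hw]
    linear_combination h
  rw [hsum]
  by_cases hi : i = j
  · subst hi
    rw [extendZero_apply_of_not _ _ _ (by simp)]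
    simp
  · simp only [extendZero, LinearMap.coe_mk, AddHom.coe_mk, hi, ne_eq, not_false_eq_true,
        dite_true, if_false]
    field_simp
    simp

/-- Instance search does not reach doubly indexed spaces by iterating the instance for products. -/
instance isAddHaarMeasure_volume_matrix {K I : Type*} [Fintype K] [Fintype I] :
    (volume : Measure (K → I → ℂ)).IsAddHaarMeasure :=
  Measure.pi.isAddHaarMeasure _

/-- Dimension count. The vectors `w k`, which depend differentiably on `v` and on a parameter `q`,
impose `card K` complex linear conditions on the rows of `M`. If `q` ranges over a space of smaller
real dimension than `2 * card K`, then for almost every `(v, M)` no value of `q` with all `w k`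
nonzero satisfies all the conditions. -/
lemma ae_exists_dot_ne_zero {V Q K I : Type*}
    [NormedAddCommGroup V] [NormedSpace ℝ V] [FiniteDimensional ℝ V]
    [MeasureSpace V] [BorelSpace V] [(volume : Measure V).IsAddHaarMeasure]
    [NormedAddCommGroup Q] [NormedSpace ℝ Q] [FiniteDimensional ℝ Q]
    [Fintype K] [Fintype I] (w : V × Q → K → I → ℂ) (hw : Differentiable ℝ w)
    (hQ : Module.finrank ℝ Q < 2 * Fintype.card K) :
    ∀ᵐ p : V × (K → I → ℂ), ∀ q : Q, (∀ k, w (p.1, q) k ≠ 0) →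
      ∃ k, ∑ i, p.2 k i * w (p.1, q) k i ≠ 0 := by
  classical
  -- The bad set is a finite union over the choices of a nonzero coordinate `j k` of each `w k`.
  suffices H : ∀ j : K → I, ∀ᵐ p : V × (K → I → ℂ), ∀ q : Q, (∀ k, w (p.1, q) k (j k) ≠ 0) →
      ∃ k, ∑ i, p.2 k i * w (p.1, q) k i ≠ 0 by
    filter_upwards [ae_all_iff.2 H] with p hp q hq
    choose j hj using fun k => Function.ne_iff.1 (hq k)
    exact hp j q hj
  intro j
  let C := ∀ k, ({i // i ≠ j k} → ℂ)
  let f : V × Q × C → V × (K → I → ℂ) := fun t =>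
    (t.1, fun k i => w (t.1, t.2.1) k (j k) * extendZero (· ≠ j k) (t.2.2 k) i
      - (∑ l, extendZero (· ≠ j k) (t.2.2 k) l * w (t.1, t.2.1) k l) * (if i = j k then 1 else 0))
  have hf : Differentiable ℝ f := by
    have h1 : ∀ k i, Differentiable ℝ (fun t : V × Q × C => w (t.1, t.2.1) k i) := fun k i =>
      differentiable_pi.1 (differentiable_pi.1
        (hw.comp (differentiable_fst.prodMk (differentiable_fst.comp differentiable_snd))) k) i
    have h2 : ∀ k i, Differentiable ℝ
        (fun t : V × Q × C => extendZero (· ≠ j k) (t.2.2 k) i) := fun k i =>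
      (differentiable_extendZero_apply (· ≠ j k) i).comp
        (differentiable_pi.1 (differentiable_snd.comp differentiable_snd) k)
    refine differentiable_fst.prodMk (differentiable_pi.2 fun k => differentiable_pi.2 fun i => ?_)
    refine ((h1 k (j k)).mul (h2 k i)).sub (Differentiable.mul_const ?_ _)
    exact Differentiable.fun_sum fun l _ => (h2 k l).mul (h1 k l)
  have hdim : Module.finrank ℝ (V × Q × C) < Module.finrank ℝ (V × (K → I → ℂ)) := by
    have hcard : ∀ k, Fintype.card {i // i ≠ j k} + 1 = Fintype.card I := fun k => by
      have : 0 < Fintype.card I := Fintype.card_pos_iff.2 ⟨j k⟩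
      have h2 : Fintype.card {i // i ≠ j k} = Fintype.card I - 1 := by simp
      omega
    have hsum : ∑ k, Fintype.card {i // i ≠ j k} + Fintype.card K
        = Fintype.card K * Fintype.card I := by
      have := Finset.sum_congr (rfl : (Finset.univ : Finset K) = _) (fun k _ => hcard k)
      rwa [Finset.sum_add_distrib, Finset.sum_const, Finset.sum_const, Finset.card_univ,
        smul_eq_mul, smul_eq_mul, mul_one] at this
    have hC : Module.finrank ℝ C = (∑ k, Fintype.card {i // i ≠ j k}) * 2 := by
      simp only [C]
      rw [Module.finrank_pi_fintype, Finset.sum_mul]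
      refine Finset.sum_congr rfl fun k _ => ?_
      rw [Module.finrank_pi_fintype]
      simp only [Complex.finrank_real_complex, Finset.sum_const, Finset.card_univ, smul_eq_mul]
    have hM : Module.finrank ℝ (K → I → ℂ) = Fintype.card K * Fintype.card I * 2 := by
      simp [Module.finrank_pi_fintype, mul_assoc]
    rw [Module.finrank_prod, Module.finrank_prod, Module.finrank_prod, hC, hM, ← hsum]
    omega
  have hvol : (volume : Measure (V × (K → I → ℂ))).IsAddHaarMeasure :=
    Measure.prod.instIsAddHaarMeasure _ _
  refine measure_mono_null ?_ (addHaar_range_eq_zero_of_finrank_lt volume f hf hdim)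
  rintro ⟨v, M⟩ hp
  simp only [Set.mem_compl_iff, Set.mem_ofPred_eq, not_forall, not_exists, not_not] at hp
  obtain ⟨q, hq, hdot⟩ := hp
  refine ⟨(v, q, fun k l => M k l / w (v, q) k (j k)), Prod.ext rfl ?_⟩
  funext k i
  exact (row_eq_of_dot_eq_zero (j k) (w (v, q) k) (M k) (hq k) (hdot k) i).symm

/-- Almost every matrix sends a fixed nonzero vector to a vector without zero entries. -/
lemma ae_forall_dot_ne_zero {K I : Type*} [Fintype K] [Fintype I] (x : I → ℂ) (hx : x ≠ 0) :
    ∀ᵐ M : K → I → ℂ, ∀ k, ∑ i, M k i * x i ≠ 0 := by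
  classical
  rw [ae_all_iff]
  intro k
  let S : Submodule ℝ (K → I → ℂ) :=
    { carrier := {M | ∑ i, M k i * x i = 0}
      add_mem' := fun {a b} ha hb => by
        simp only [Set.mem_ofPred_eq, Pi.add_apply, add_mul, Finset.sum_add_distrib] at ha hb ⊢
        rw [ha, hb, add_zero]
      zero_mem' := by simp
      smul_mem' := fun r a ha => by
        simp only [Set.mem_ofPred_eq, Pi.smul_apply, smul_mul_assoc, ← Finset.smul_sum] at ha ⊢
        rw [ha, smul_zero] }
  have hS : S ≠ ⊤ := by
    intro htop
    obtain ⟨i, hi⟩ := Function.ne_iff.1 hx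
    have hmem : (fun _ => Pi.single i 1 : K → I → ℂ) ∈ S := htop ▸ Submodule.mem_top
    have hmem' : ∑ l, (Pi.single i 1 : I → ℂ) l * x l = 0 := hmem
    simp [Pi.single_apply] at hmem'
    exact hi hmem'
  refine measure_mono_null ?_ (Measure.addHaar_submodule volume S hS)
  intro M hM
  simpa [S] using hM

/-! ### Sparse vectors -/

lemma exists_finset_of_l0_le {m s : ℕ} (x : Fin m → ℂ) (h : l0 x ≤ s) :
    ∃ S : Finset (Fin m), S.card ≤ s ∧ ∀ i, i ∉ S → x i = 0 := by
  classical
  refine ⟨(Set.toFinite (Function.support x)).toFinset, ?_, fun i hi => by simpa using hi⟩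
  rwa [l0, Set.ncard_eq_toFinset_card _ (Set.toFinite _)] at h

lemma finrank_real_finset_fun {m : ℕ} (S : Finset (Fin m)) :
    Module.finrank ℝ ({i // i ∈ S} → ℂ) = 2 * S.card := by
  simp [Module.finrank_pi_fintype, mul_comm]

/-! ### Discrete Fourier transform -/

/-- The discrete Fourier transform turns circular convolution into the pointwise product. -/
lemma dft_cconv {n : ℕ} [NeZero n] (u v : ZMod n → ℂ) (k : ZMod n) :
    ZMod.dft (cconv u v) k = ZMod.dft u k * ZMod.dft v k := by
  simp only [ZMod.dft_apply, cconv, smul_eq_mul, Finset.mul_sum, Finset.sum_mul]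
  rw [Finset.sum_comm]
  conv_rhs => rw [Finset.sum_comm]
  refine Finset.sum_congr rfl fun j _ => ?_
  refine Fintype.sum_equiv (Equiv.subRight j) _ _ fun l => ?_
  have : -(l * k) = -(j * k) + -((l - j) * k) := by ring
  rw [this, AddChar.map_add_eq_mul, Equiv.subRight_apply]
  ring

lemma dft_mApply {n m : ℕ} [NeZero n] (D : ZMod n → Fin m → ℂ) (x : Fin m → ℂ) (k : ZMod n) :
    ZMod.dft (mApply D x) k = ∑ i, ZMod.dft D k i * x i := by
  simp only [ZMod.dft_apply, mApply, smul_eq_mul, Finset.sum_apply, Pi.smul_apply, Finset.sum_mul,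
    Finset.mul_sum]
  rw [Finset.sum_comm]
  simp only [mul_assoc]

/-- Applying the discrete Fourier transform to both factors preserves null sets. -/
lemma ae_dft {n m1 m2 : ℕ} [NeZero n]
    {p : (ZMod n → Fin m1 → ℂ) × (ZMod n → Fin m2 → ℂ) → Prop} (h : ∀ᵐ AB, p AB) :
    ∀ᵐ DE : (ZMod n → Fin m1 → ℂ) × (ZMod n → Fin m2 → ℂ),
      p (ZMod.dft DE.1, ZMod.dft DE.2) := by
  have hvol : (volume : Measure ((ZMod n → Fin m1 → ℂ) × (ZMod n → Fin m2 → ℂ))).IsAddHaarMeasure :=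
    Measure.prod.instIsAddHaarMeasure _ _
  let F : ((ZMod n → Fin m1 → ℂ) × (ZMod n → Fin m2 → ℂ)) ≃ₗ[ℝ]
      ((ZMod n → Fin m1 → ℂ) × (ZMod n → Fin m2 → ℂ)) :=
    (LinearEquiv.prodCongr ZMod.dft ZMod.dft).restrictScalars ℝ
  exact (Measure.LinearMap.quasiMeasurePreserving volume F.toLinearMap
    (LinearEquiv.isUnit_det' F).ne_zero).ae h

/-! ### Generic separation properties -/

/-- Almost every `A` separates `x0`-multiples from sparse vectors: it kills no nonzero vector of the
form `x - σ • x0` with `x` sparse, as these vectors lie in finitely many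
subspaces of dimension at most `s1 + 1`. -/
lemma ae_sub_smul_separated {n m1 m2 s1 : ℕ} [NeZero n] (hn : s1 + 1 < n) (x0 : Fin m1 → ℂ) :
    ∀ᵐ AB : (ZMod n → Fin m1 → ℂ) × (ZMod n → Fin m2 → ℂ), ∀ x : Fin m1 → ℂ, l0 x ≤ s1 →
      ∀ σ : ℂ, x - σ • x0 ≠ 0 → ∃ k, ∑ i, AB.1 k i * (x - σ • x0) i ≠ 0 := by
  suffices H : ∀ S : Finset (Fin m1), S.card ≤ s1 →
      ∀ᵐ BA : (ZMod n → Fin m2 → ℂ) × (ZMod n → Fin m1 → ℂ), ∀ q : ({i // i ∈ S} → ℂ) × ℂ,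
        (∀ _k : ZMod n, extendZero (· ∈ S) q.1 - q.2 • x0 ≠ 0) →
        ∃ k, ∑ i, BA.2 k i * (extendZero (· ∈ S) q.1 - q.2 • x0) i ≠ 0 by
    have H' := ae_all_iff.2 fun S => ae_all_iff.2 (H S)
    filter_upwards [(Measure.measurePreserving_swap (μ := volume)
      (ν := volume)).quasiMeasurePreserving.ae H'] with AB hAB x hx σ hσ
    obtain ⟨S, hS, hxS⟩ := exists_finset_of_l0_le x hx
    have := hAB S hS (fun i => x i, σ)
    rw [extendZero_restrict _ x hxS] at this
    exact this fun _ => hσ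
  intro S hS
  refine ae_exists_dot_ne_zero
    (w := fun (p : (ZMod n → Fin m2 → ℂ) × ({i // i ∈ S} → ℂ) × ℂ) _ =>
      extendZero (· ∈ S) p.2.1 - p.2.2 • x0) ?_ ?_
  · refine differentiable_pi.2 fun k => differentiable_pi.2 fun i => ?_
    refine ((differentiable_extendZero_apply (· ∈ S) i).comp
      (differentiable_fst.comp differentiable_snd)).sub ?_
    exact (differentiable_snd.comp differentiable_snd).mul_const _
  · rw [Module.finrank_prod, finrank_real_finset_fun, Complex.finrank_real_complex, ZMod.card]
    omega

/-- For almost every `(A, B)`, a sparse `x` and a `y` such that no `(A x) k • y` equals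
`(A x0) k • y0` violate one of the equations `(A x) k * (B y) k = (A x0) k * (B y0) k`. -/
lemma ae_bilinear_separated {n m1 m2 s1 : ℕ} [NeZero n] (hn : s1 + m2 < n)
    (x0 : Fin m1 → ℂ) (y0 : Fin m2 → ℂ) :
    ∀ᵐ AB : (ZMod n → Fin m1 → ℂ) × (ZMod n → Fin m2 → ℂ), ∀ x : Fin m1 → ℂ, l0 x ≤ s1 →
      ∀ y : Fin m2 → ℂ,
        (∀ k, (∑ i, AB.1 k i * x i) • y - (∑ i, AB.1 k i * x0 i) • y0 ≠ 0) →
        ∃ k, ∑ l, AB.2 k l *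
          ((∑ i, AB.1 k i * x i) • y - (∑ i, AB.1 k i * x0 i) • y0) l ≠ 0 := by
  suffices H : ∀ S : Finset (Fin m1), S.card ≤ s1 →
      ∀ᵐ AB : (ZMod n → Fin m1 → ℂ) × (ZMod n → Fin m2 → ℂ),
        ∀ q : ({i // i ∈ S} → ℂ) × (Fin m2 → ℂ),
        (∀ k, (∑ i, AB.1 k i * extendZero (· ∈ S) q.1 i) • q.2
          - (∑ i, AB.1 k i * x0 i) • y0 ≠ 0) →
        ∃ k, ∑ l, AB.2 k l * ((∑ i, AB.1 k i * extendZero (· ∈ S) q.1 i) • q.2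
          - (∑ i, AB.1 k i * x0 i) • y0) l ≠ 0 by
    filter_upwards [ae_all_iff.2 fun S => ae_all_iff.2 (H S)] with AB hAB x hx y hy
    obtain ⟨S, hS, hxS⟩ := exists_finset_of_l0_le x hx
    have := hAB S hS (fun i => x i, y)
    rw [extendZero_restrict _ x hxS] at this
    exact this hy
  intro S hS
  refine ae_exists_dot_ne_zero
    (w := fun (p : (ZMod n → Fin m1 → ℂ) × ({i // i ∈ S} → ℂ) × (Fin m2 → ℂ)) k =>
      (∑ i, p.1 k i * extendZero (· ∈ S) p.2.1 i) • p.2.2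
      - (∑ i, p.1 k i * x0 i) • y0) ?_ ?_
  · have hA : ∀ k i, Differentiable ℝ (fun p : (ZMod n → Fin m1 → ℂ) ×
        ({i // i ∈ S} → ℂ) × (Fin m2 → ℂ) => p.1 k i) := fun k i => by fun_prop
    have hx : ∀ i, Differentiable ℝ (fun p : (ZMod n → Fin m1 → ℂ) ×
        ({i // i ∈ S} → ℂ) × (Fin m2 → ℂ) => extendZero (· ∈ S) p.2.1 i) := fun i =>
      (differentiable_extendZero_apply (· ∈ S) i).comp
        (differentiable_fst.comp differentiable_snd)
    refine differentiable_pi.2 fun k => differentiable_pi.2 fun l => ?_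
    refine Differentiable.sub (Differentiable.mul ?_ (by fun_prop)) (Differentiable.mul_const ?_ _)
    · exact Differentiable.fun_sum fun i _ => (hA k i).mul (hx i)
    · exact Differentiable.fun_sum fun i _ => (hA k i).mul_const _
  · rw [Module.finrank_prod, finrank_real_finset_fun, ZMod.card]
    have : Module.finrank ℝ (Fin m2 → ℂ) = 2 * m2 := by
      simp [Module.finrank_pi_fintype, mul_comm]
    omega

/-! ### Weak identifiability -/

/-- Weak identifiability of blind deconvolution with mixed sparsity/subspace constraints:
if `n > s1 + m2`, then for Lebesgue-almost all `(D, E)`, every `(x, y)` with `x` `s1`-sparse and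
`(Dx) ⊛ (Ey) = (Dx0) ⊛ (Ey0)` is a scaled version of `(x0, y0)`. -/
theorem weak_identifiability_mixed (n m1 m2 s1 : ℕ) [NeZero n]
    (hm1 : 0 < m1) (hm2 : 0 < m2) (hs1 : 0 < s1)
    (hs1m : s1 ≤ m1) (hn : s1 + m2 < n)
    (x0 : Fin m1 → ℂ) (hx0 : x0 ≠ 0) (hx0s : l0 x0 ≤ s1)
    (y0 : Fin m2 → ℂ) (hy0 : y0 ≠ 0) :
    ∀ᵐ DE : (ZMod n → Fin m1 → ℂ) × (ZMod n → Fin m2 → ℂ),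
      ∀ x : Fin m1 → ℂ, ∀ y : Fin m2 → ℂ, l0 x ≤ s1 →
        cconv (mApply DE.1 x) (mApply DE.2 y) = cconv (mApply DE.1 x0) (mApply DE.2 y0) →
        ∃ σ : ℂ, σ ≠ 0 ∧ x = σ • x0 ∧ y = σ⁻¹ • y0 := by
  have hA0 : ∀ᵐ AB : (ZMod n → Fin m1 → ℂ) × (ZMod n → Fin m2 → ℂ),
      ∀ k, ∑ i, AB.1 k i * x0 i ≠ 0 :=
    Measure.quasiMeasurePreserving_fst.ae (ae_forall_dot_ne_zero x0 hx0)
  have hB0 : ∀ᵐ AB : (ZMod n → Fin m1 → ℂ) × (ZMod n → Fin m2 → ℂ),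
      ∀ k, ∑ i, AB.2 k i * y0 i ≠ 0 :=
    Measure.quasiMeasurePreserving_snd.ae (ae_forall_dot_ne_zero y0 hy0)
  filter_upwards [ae_dft hA0, ae_dft hB0,
    ae_dft (ae_sub_smul_separated (s1 := s1) (m2 := m2) (by omega) x0),
    ae_dft (ae_bilinear_separated hn x0 y0)] with DE hA hB hsep hbil x y hx heq
  generalize hAdef : ZMod.dft DE.1 = A at *
  generalize hBdef : ZMod.dft DE.2 = B at *
  have hprod : ∀ k, (∑ i, A k i * x i) * (∑ l, B k l * y l)
      = (∑ i, A k i * x0 i) * (∑ l, B k l * y0 l) := by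
    intro k
    have := congrFun (congrArg ZMod.dft heq) k
    simpa only [dft_cconv, dft_mApply, hAdef, hBdef] using this
  have hdot : ∀ k (a b : ℂ), ∑ l, B k l * (a • y - b • y0) l
      = a * (∑ l, B k l * y l) - b * (∑ l, B k l * y0 l) := by
    intro k a b
    rw [Finset.mul_sum, Finset.mul_sum, ← Finset.sum_sub_distrib]
    refine Finset.sum_congr rfl fun l _ => ?_
    simp only [Pi.sub_apply, Pi.smul_apply, smul_eq_mul]
    ring
  obtain ⟨k, hk⟩ : ∃ k, (∑ i, A k i * x i) • y - (∑ i, A k i * x0 i) • y0 = 0 := by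
    by_contra! hne
    obtain ⟨k, hk⟩ := hbil x hx y hne
    exact hk (by rw [hdot, hprod, sub_self])
  rw [sub_eq_zero] at hk
  -- A single proportional frequency already makes `y` a multiple of `y0`.
  have hu : (∑ i, A k i * x i) ≠ 0 := by
    intro hu
    rw [hu, zero_smul] at hk
    exact (smul_ne_zero (hA k) hy0) hk.symm
  set σ : ℂ := (∑ i, A k i * x i) / (∑ i, A k i * x0 i) with hσ
  have hσ0 : σ ≠ 0 := div_ne_zero hu (hA k)
  have hy : y = σ⁻¹ • y0 := by
    rw [hσ, inv_div, div_eq_inv_mul, mul_smul, ← hk, inv_smul_smul₀ hu]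
  refine ⟨σ, hσ0, ?_, hy⟩
  by_contra hne
  obtain ⟨l, hl⟩ := hsep x hx σ (sub_ne_zero.2 hne)
  apply hl
  have hBy : ∑ i, B l i * y i = σ⁻¹ * ∑ i, B l i * y0 i := by
    rw [hy, Finset.mul_sum]
    refine Finset.sum_congr rfl fun i _ => ?_
    simp only [Pi.smul_apply, smul_eq_mul]
    ring
  have hAl : ∑ i, A l i * (x - σ • x0) i
      = (∑ i, A l i * x i) - σ * ∑ i, A l i * x0 i := by
    rw [Finset.mul_sum, ← Finset.sum_sub_distrib]
    refine Finset.sum_congr rfl fun i _ => ?_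
    simp only [Pi.sub_apply, Pi.smul_apply, smul_eq_mul]
    ring
  have h1 := hprod l
  rw [hBy] at h1
  rw [hAl, sub_eq_zero]
  refine mul_right_cancel₀ (mul_ne_zero (inv_ne_zero hσ0) (hB l)) ?_
  rw [h1]
  field_simp
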